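/- Suppose there exist constants C > 0 and C_u > 0 such that for every multi-index α ∈ ℕ^d one has ‖∂^α u‖_{L²(D)} ≤ C_u · C^{|α|} · max{|α|, k}^{|α|}. Then u is real-analytic on D, and there exists a constant c > 0 depending only on d (in particular independent of k and C_u) such that for every x₀ ∈ D the Taylor series of u at x₀ has radius of convergence at least c/C. -/

import Mathlib

open MeasureTheory

/-- Partial derivative of a function `ℝ^d → ℂ` in the `i`-th coordinate direction. -/
noncomputable def pderivDir (d : ℕ) (i : Fin d) (f : EuclideanSpace ℝ (Fin d) → ℂ) :
    EuclideanSpace ℝ (Fin d) → ℂ :=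
  fun x => fderiv ℝ f x (EuclideanSpace.single i 1)

/-- Iterated partial derivatives along a list of coordinate directions. -/
noncomputable def pderivList (d : ℕ) :
    List (Fin d) → (EuclideanSpace ℝ (Fin d) → ℂ) → EuclideanSpace ℝ (Fin d) → ℂ
  | [], f => f
  | i :: l, f => pderivDir d i (pderivList d l f)

/-- The iterated partial derivative `∂^α` for a multi-index `α : Fin d → ℕ`,
taken in the canonical coordinate order. -/
noncomputable def partialDerivMulti (d : ℕ) (α : Fin d → ℕ)
    (f : EuclideanSpace ℝ (Fin d) → ℂ) : EuclideanSpace ℝ (Fin d) → ℂ :=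
  pderivList d ((List.finRange d).flatMap fun i => List.replicate (α i) i) f

/-!
Multiply `u` by a cutoff that is `1` near `x₀`. On a cube, integrating the one-dimensional
fundamental theorem of calculus in one coordinate after another bounds `‖f‖` by the integral of
the derivatives of `f` of order at most `d`. Applied to `f = Dⁿu`, this turns `L^q` bounds on all
derivatives into pointwise ones at the cost of `d` extra derivatives, which only doubles a
geometric rate: as `max n k ^ n ≤ e ^ |k| e ^ n n!`, the pointwise bounds have the form `‖Dⁿu‖ ≤ B
(2 d e C)ⁿ n!`, the factor `dⁿ` counting the partial derivatives of order `n`. With such bounds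
the remainder of the Taylor series tends to zero near `x₀`, and the `n`-th term has norm at most
`B (2 d e C)ⁿ`.
-/

open Set Metric Filter
open scoped Nat ContDiff Topology ENNReal

section TaylorSeries

variable {E F : Type*} [NormedAddCommGroup E] [NormedSpace ℝ E]
  [NormedAddCommGroup F] [NormedSpace ℝ F] {f g : E → F} {x y : E}

/-- The Taylor series of `f` at `x`, with `n`-th term `(1 / n!) Dⁿf(x)`. In contrast to
`ftaylorSeries`, the factorials are included, so that this series sums to `f` near `x` when `f` is
analytic. -/
noncomputable def taylorSeries (f : E → F) (x : E) : FormalMultilinearSeries ℝ E F :=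
  fun n => (n ! : ℝ)⁻¹ • iteratedFDeriv ℝ n f x

lemma taylorSeries_congr (h : f =ᶠ[𝓝 x] g) :
    taylorSeries f x = taylorSeries g x := by
  ext1 n
  rw [taylorSeries, taylorSeries, (h.iteratedFDeriv ℝ n).eq_of_nhds]

lemma norm_taylorSeries_le {B : ℝ} {n : ℕ} (h : ‖iteratedFDeriv ℝ n f x‖ ≤ B * n !) :
    ‖taylorSeries f x n‖ ≤ B := by
  rw [taylorSeries, norm_smul, norm_inv, Real.norm_natCast, inv_mul_le_iff₀ (by positivity)]
  linarith

lemma inv_le_radius_taylorSeries {A R : ℝ} (hR : 0 < R)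
    (h : ∀ n, ‖iteratedFDeriv ℝ n f x‖ ≤ A * R ^ n * n !) :
    ENNReal.ofReal R⁻¹ ≤ (taylorSeries f x).radius := by
  refine FormalMultilinearSeries.le_radius_of_bound _ A (r := R⁻¹.toNNReal) fun n => ?_
  rw [Real.coe_toNNReal _ (by positivity)]
  calc ‖taylorSeries f x n‖ * R⁻¹ ^ n ≤ A * R ^ n * R⁻¹ ^ n := by
        gcongr
        exact norm_taylorSeries_le (h n)
    _ = A := by rw [mul_assoc, ← mul_pow, mul_inv_cancel₀ hR.ne', one_pow, mul_one]

lemma norm_sub_partialSum_taylorSeries_le [CompleteSpace F] {n : ℕ} {M : ℝ}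
    (hf : ∀ t ∈ Icc (0 : ℝ) 1, ContDiffAt ℝ (n + 1) f (x + t • y))
    (hM : ∀ t ∈ Icc (0 : ℝ) 1, ‖iteratedFDeriv ℝ (n + 1) f (x + t • y)‖ ≤ M) :
    ‖f (x + y) - (taylorSeries f x).partialSum (n + 1) y‖ ≤ (n ! : ℝ)⁻¹ * (M * ‖y‖ ^ (n + 1)) := by
  have remainder : f (x + y) - (taylorSeries f x).partialSum (n + 1) y =
      (n ! : ℝ)⁻¹ • ∫ t in 0..1, (1 - t) ^ n • iteratedFDeriv ℝ (n + 1) f (x + t • y)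
        (fun _ => y) := by
    rw [map_add_eq_sum_add_integral_iteratedFDeriv hf]
    exact add_sub_cancel_left _ _
  rw [remainder, norm_smul, norm_inv, Real.norm_natCast]
  gcongr
  have integrand_le : ∀ t ∈ uIoc (0 : ℝ) 1,
      ‖(1 - t) ^ n • iteratedFDeriv ℝ (n + 1) f (x + t • y) (fun _ => y)‖ ≤
        M * ‖y‖ ^ (n + 1) := by
    intro t ht
    rw [uIoc_of_le zero_le_one] at ht
    have weight_le : ‖(1 - t) ^ n‖ ≤ 1 := by
      rw [norm_pow, Real.norm_of_nonneg (by linarith [ht.2])]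
      exact pow_le_one₀ (by linarith [ht.2]) (by linarith [ht.1])
    have deriv_le : ‖iteratedFDeriv ℝ (n + 1) f (x + t • y) (fun _ => y)‖ ≤ M * ‖y‖ ^ (n + 1) := by
      simpa using ContinuousMultilinearMap.le_of_opNorm_le (hM t ⟨ht.1.le, ht.2⟩) fun _ => y
    rw [norm_smul]
    exact (mul_le_of_le_one_left (norm_nonneg _) weight_le).trans deriv_le
  simpa using intervalIntegral.norm_integral_le_of_norm_le_const integrand_le

theorem tendsto_partialSum_taylorSeries [CompleteSpace F] {A R : ℝ} (hR : 0 ≤ R)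
    (hf : ∀ t ∈ Icc (0 : ℝ) 1, ContDiffAt ℝ ∞ f (x + t • y))
    (h : ∀ t ∈ Icc (0 : ℝ) 1, ∀ n, ‖iteratedFDeriv ℝ n f (x + t • y)‖ ≤ A * R ^ n * n !)
    (hy : R * ‖y‖ < 1) :
    Tendsto (fun n => (taylorSeries f x).partialSum n y) atTop (𝓝 (f (x + y))) := by
  rw [← tendsto_add_atTop_iff_nat 1, tendsto_iff_norm_sub_tendsto_zero]
  have bound_tendsto :
      Tendsto (fun n : ℕ => A * ((n + 1 : ℕ) * (R * ‖y‖) ^ (n + 1))) atTop (𝓝 0) := by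
    simpa using ((tendsto_add_atTop_iff_nat 1).2
      (tendsto_self_mul_const_pow_of_lt_one (by positivity) hy)).const_mul A
  refine squeeze_zero (fun _ => norm_nonneg _) (fun n => ?_) bound_tendsto
  rw [norm_sub_rev]
  calc ‖f (x + y) - (taylorSeries f x).partialSum (n + 1) y‖
      ≤ (n ! : ℝ)⁻¹ * (A * R ^ (n + 1) * (n + 1)! * ‖y‖ ^ (n + 1)) :=
        norm_sub_partialSum_taylorSeries_le (fun t ht => (hf t ht).of_le (mod_cast le_top))
          fun t ht => h t ht (n + 1)
    _ = A * ((n + 1 : ℕ) * (R * ‖y‖) ^ (n + 1)) := by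
        rw [Nat.factorial_succ, mul_pow]
        push_cast
        field_simp

theorem hasFPowerSeriesOnBall_taylorSeries [CompleteSpace F] {A R r : ℝ} (hR : 0 < R) (hr : 0 < r)
    (hf : ∀ z ∈ ball x r, ContDiffAt ℝ ∞ f z)
    (h : ∀ z ∈ ball x r, ∀ n, ‖iteratedFDeriv ℝ n f z‖ ≤ A * R ^ n * n !) :
    HasFPowerSeriesOnBall f (taylorSeries f x) x (ENNReal.ofReal (min r R⁻¹)) := by
  have radius_le : ENNReal.ofReal (min r R⁻¹) ≤ (taylorSeries f x).radius :=
    (ENNReal.ofReal_le_ofReal (min_le_right _ _)).trans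
      (inv_le_radius_taylorSeries hR (h x (mem_ball_self hr)))
  refine ⟨radius_le, by simp [hr, hR], fun {y} hy => ?_⟩
  have terms_summable : Summable fun n => taylorSeries f x n fun _ => y :=
    (FormalMultilinearSeries.hasSum _ (eball_subset_eball radius_le hy)).summable
  rw [eball_ofReal, mem_ball_zero_iff, lt_min_iff] at hy
  have segment_mem_ball : ∀ t ∈ Icc (0 : ℝ) 1, x + t • y ∈ ball x r := by
    intro t ht
    rw [mem_ball_iff_norm, add_sub_cancel_left, norm_smul, Real.norm_of_nonneg ht.1]
    exact (mul_le_of_le_one_left (norm_nonneg y) ht.2).trans_lt hy.1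
  refine terms_summable.hasSum_iff_tendsto_nat.2 (tendsto_partialSum_taylorSeries hR.le
    (fun t ht => hf _ (segment_mem_ball t ht)) (fun t ht => h _ (segment_mem_ball t ht)) ?_)
  calc R * ‖y‖ < R * R⁻¹ := by gcongr; exact hy.2
    _ = 1 := mul_inv_cancel₀ hR.ne'

end TaylorSeries

section Sobolev

open Function Finset

-- The mean of `‖g‖` bounds some value of `‖g‖`, and the oscillation of `g` is at most `∫ ‖g'‖`.
lemma enorm_le_inv_mul_setLIntegral_add {F : Type*} [NormedAddCommGroup F] [NormedSpace ℝ F]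
    [CompleteSpace F] {g g' : ℝ → F} {a b t : ℝ} (hab : a < b)
    (hg : ∀ s ∈ Icc a b, HasDerivAt g (g' s) s) (hg' : IntegrableOn g' (Icc a b))
    (ht : t ∈ Icc a b) :
    ‖g t‖ₑ ≤ (ENNReal.ofReal (b - a))⁻¹ * (∫⁻ s in Icc a b, ‖g s‖ₑ) +
      ∫⁻ s in Icc a b, ‖g' s‖ₑ := by
  have le_add_oscillation : ∀ s ∈ Icc a b, ‖g t‖ₑ ≤ ‖g s‖ₑ + ∫⁻ s in Icc a b, ‖g' s‖ₑ := by
    intro s hs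
    have uIcc_subset : uIcc s t ⊆ Icc a b := uIcc_subset_Icc hs ht
    have ftc : g t = g s + ∫ x in s..t, g' x := by
      rw [intervalIntegral.integral_eq_sub_of_hasDerivAt (fun x hx => hg x (uIcc_subset hx))
        (hg'.mono_set uIcc_subset).intervalIntegrable, add_sub_cancel]
    rw [ftc]
    refine (enorm_add_le _ _).trans ?_
    gcongr
    rw [← ofReal_norm, intervalIntegral.norm_intervalIntegral_eq, ofReal_norm]
    exact (enorm_integral_le_lintegral_enorm _).trans
      (lintegral_mono_set (uIoc_subset_uIcc.trans uIcc_subset))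
  set length := ENNReal.ofReal (b - a)
  have length_ne_zero : length ≠ 0 := by simpa [length] using hab
  have length_ne_top : length ≠ ⊤ := ENNReal.ofReal_ne_top
  have integrated : ‖g t‖ₑ * length ≤
      (∫⁻ s in Icc a b, ‖g s‖ₑ) + (∫⁻ s in Icc a b, ‖g' s‖ₑ) * length := by
    have g_continuousOn : ContinuousOn g (Icc a b) :=
      fun s hs => (hg s hs).continuousAt.continuousWithinAt
    have := setLIntegral_mono' (μ := volume) measurableSet_Icc le_add_oscillation
    rwa [lintegral_add_left' (g_continuousOn.aestronglyMeasurable measurableSet_Icc).enorm,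
      setLIntegral_const, setLIntegral_const, Real.volume_Icc] at this
  calc ‖g t‖ₑ = length⁻¹ * (‖g t‖ₑ * length) := by
        rw [mul_comm, mul_assoc, ENNReal.mul_inv_cancel length_ne_zero length_ne_top, mul_one]
    _ ≤ length⁻¹ * ((∫⁻ s in Icc a b, ‖g s‖ₑ) + (∫⁻ s in Icc a b, ‖g' s‖ₑ) * length) := by gcongr
    _ = _ := by
        rw [mul_add, mul_comm _ length, ← mul_assoc length⁻¹ length,
          ENNReal.inv_mul_cancel length_ne_zero length_ne_top, one_mul]

lemma le_pow_mul_lmarginal_of_le_mul_lintegral_update {ι : Type*} [DecidableEq ι]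
    {X : ι → Type*} [∀ i, MeasurableSpace (X i)] {μ : ∀ i, Measure (X i)} [∀ i, SigmaFinite (μ i)]
    {I : ∀ i, Set (X i)} (hI : ∀ i, MeasurableSet (I i)) {N : ℕ} {W : ℕ → (∀ i, X i) → ℝ≥0∞}
    (hWm : ∀ m ≤ N, Measurable (W m)) {K : ℝ≥0∞}
    (hW : ∀ m < N, ∀ i, ∀ x ∈ univ.pi I,
      W m x ≤ K * ∫⁻ t in I i, W (m + 1) (update x i t) ∂μ i)
    (s : Finset ι) {m : ℕ} (hm : m + #s ≤ N) {x : ∀ i, X i} (hx : x ∈ univ.pi I) :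
    W m x ≤ K ^ #s * (∫⋯∫⁻_s, W (m + #s) ∂fun i => (μ i).restrict (I i)) x := by
  induction s using Finset.induction_on generalizing m x with
  | empty => simp
  | insert i s hi ih =>
    rw [card_insert_of_notMem hi] at hm ⊢
    have last_measurable : Measurable (W (m + (#s + 1))) := hWm _ hm
    have marginal_measurable : Measurable fun t =>
        (∫⋯∫⁻_s, W (m + (#s + 1)) ∂fun i => (μ i).restrict (I i)) (update x i t) :=
      (last_measurable.lmarginal _).comp (measurable_update x)
    rw [lmarginal_insert _ last_measurable hi, pow_succ', mul_assoc,
      ← lintegral_const_mul _ marginal_measurable]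
    refine (hW m (by lia) i x hx).trans ?_
    gcongr K * ?_
    refine setLIntegral_mono' (hI i) fun t ht => ?_
    have update_mem : update x i t ∈ univ.pi I := by
      simpa using update_mem_pi_iff_of_mem hx |>.2 fun _ => ht
    rw [add_comm #s, ← add_assoc] at hm ⊢
    exact ih hm update_mem

variable {ι : Type*} [Fintype ι] {F : Type*} [NormedAddCommGroup F] [NormedSpace ℝ F]

/-- The closed cube with centre `z` and half side length `δ` in Euclidean space: the closed ball of
the sup norm, on which Euclidean volume is a product measure. -/
def closedCube (z : EuclideanSpace ℝ ι) (δ : ℝ) : Set (EuclideanSpace ℝ ι) :=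
  WithLp.ofLp ⁻¹' closedBall (WithLp.ofLp z) δ

lemma closedCube_mem_nhds (z : EuclideanSpace ℝ ι) {δ : ℝ} (hδ : 0 < δ) : closedCube z δ ∈ 𝓝 z :=
  (PiLp.continuous_ofLp 2 _).continuousAt.preimage_mem_nhds (closedBall_mem_nhds _ hδ)

lemma isCompact_closedCube (z : EuclideanSpace ℝ ι) (δ : ℝ) : IsCompact (closedCube z δ) :=
  (PiLp.homeomorph 2 _).isCompact_preimage.2 (isCompact_closedBall _ _)

lemma exists_closedCube_subset {z : EuclideanSpace ℝ ι} {U : Set (EuclideanSpace ℝ ι)}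
    (hU : U ∈ 𝓝 z) : ∃ δ > 0, closedCube z δ ⊆ U := by
  have preimage_mem : WithLp.toLp 2 ⁻¹' U ∈ 𝓝 (WithLp.ofLp z) :=
    (PiLp.continuous_toLp 2 _).continuousAt.preimage_mem_nhds (by simpa using hU)
  obtain ⟨δ, hδ, hδU⟩ := nhds_basis_closedBall.mem_iff.1 preimage_mem
  exact ⟨δ, hδ, fun y hy => hδU hy⟩

lemma preimage_toLp_closedCube (z : EuclideanSpace ℝ ι) {δ : ℝ} (hδ : 0 ≤ δ) :
    WithLp.toLp 2 ⁻¹' closedCube z δ = univ.pi fun i => Icc (z i - δ) (z i + δ) := by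
  simp_rw [← Real.closedBall_eq_Icc]
  exact closedBall_pi _ hδ

lemma setLIntegral_closedCube (z : EuclideanSpace ℝ ι) {δ : ℝ} (hδ : 0 ≤ δ)
    {w : EuclideanSpace ℝ ι → ℝ≥0∞} (hw : Measurable w) :
    ∫⁻ y in closedCube z δ, w y =
      ∫⁻ y, w (WithLp.toLp 2 y)
        ∂Measure.pi fun i => volume.restrict (Icc (z i - δ) (z i + δ)) := by
  rw [← (PiLp.volume_preserving_toLp ι).setLIntegral_comp_preimage
    (isCompact_closedCube z δ).measurableSet hw, preimage_toLp_closedCube z hδ, volume_pi,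
    Measure.restrict_pi_pi]

/-- The sum of the norms of the derivatives of `f` at `x` of order at most `m`, in `ℝ≥0∞`. -/
noncomputable def jetENorm {E : Type*} [NormedAddCommGroup E] [NormedSpace ℝ E] (m : ℕ)
    (f : E → F) (x : E) : ℝ≥0∞ :=
  ∑ j ∈ range (m + 1), ‖iteratedFDeriv ℝ j f x‖ₑ

lemma jetENorm_zero {E : Type*} [NormedAddCommGroup E] [NormedSpace ℝ E] (f : E → F) (x : E) :
    jetENorm 0 f x = ‖f x‖ₑ := by
  simp [jetENorm, ← ofReal_norm]

lemma continuous_jetENorm {E : Type*} [NormedAddCommGroup E] [NormedSpace ℝ E] {m : ℕ}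
    {f : E → F} (hf : ContDiff ℝ m f) : Continuous (jetENorm m f) :=
  continuous_finsetSum _ fun j hj =>
    (hf.continuous_iteratedFDeriv (m := j) (mod_cast mem_range_succ_iff.1 hj)).enorm

lemma sum_enorm_add_enorm_le_two_mul_jetENorm {E : Type*} [NormedAddCommGroup E]
    [NormedSpace ℝ E] (m : ℕ) (f : E → F) (x : E) :
    ∑ j ∈ range (m + 1), (‖iteratedFDeriv ℝ j f x‖ₑ + ‖iteratedFDeriv ℝ (j + 1) f x‖ₑ) ≤
      2 * jetENorm (m + 1) f x := by
  rw [sum_add_distrib, two_mul, jetENorm]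
  gcongr
  · exact m.le_succ
  · rw [sum_range_succ' _ (m + 1)]
    exact le_self_add

lemma enorm_le_mul_setLIntegral_update [DecidableEq ι] [CompleteSpace F]
    {g : EuclideanSpace ℝ ι → F} (hg : ContDiff ℝ 1 g)
    {a b : ℝ} (hab : a < b) {x : ι → ℝ} {i : ι} (hx : x i ∈ Icc a b) :
    ‖g (WithLp.toLp 2 x)‖ₑ ≤ (1 + (ENNReal.ofReal (b - a))⁻¹) * ∫⁻ t in Icc a b,
      (‖g (WithLp.toLp 2 (update x i t))‖ₑ + ‖fderiv ℝ g (WithLp.toLp 2 (update x i t))‖ₑ) := by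
  let line (t : ℝ) : EuclideanSpace ℝ ι := WithLp.toLp 2 (update x i t)
  have hasDerivAt_line (t : ℝ) : HasDerivAt line (EuclideanSpace.single i 1) t :=
    (PiLp.hasFDerivAt_toLp 2 _).comp_hasDerivAt t (hasDerivAt_update x i t)
  have line_continuous : Continuous line :=
    continuous_iff_continuousAt.2 fun t => (hasDerivAt_line t).continuousAt
  have hasDerivAt_comp_line (t : ℝ) : HasDerivAt (fun s => g (line s))
      (fderiv ℝ g (line t) (EuclideanSpace.single i 1)) t :=
    ((hg.differentiable one_ne_zero _).hasFDerivAt).comp_hasDerivAt t (hasDerivAt_line t)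
  have deriv_continuous :
      Continuous fun t => fderiv ℝ g (line t) (EuclideanSpace.single i 1) :=
    ((hg.continuous_fderiv one_ne_zero).comp line_continuous).clm_apply continuous_const
  have deriv_le (t : ℝ) :
      ‖fderiv ℝ g (line t) (EuclideanSpace.single i 1)‖ₑ ≤ ‖fderiv ℝ g (line t)‖ₑ := by
    rw [← ofReal_norm, ← ofReal_norm]
    exact ENNReal.ofReal_le_ofReal (by
      simpa using (fderiv ℝ g (line t)).le_opNorm (EuclideanSpace.single i 1))
  have line_bound := enorm_le_inv_mul_setLIntegral_add hab (fun t _ => hasDerivAt_comp_line t)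
    deriv_continuous.continuousOn.integrableOn_Icc hx
  simp only [line, update_eq_self] at line_bound
  have value_measurable : Measurable fun t => ‖g (WithLp.toLp 2 (update x i t))‖ₑ :=
    (hg.continuous.comp line_continuous).enorm.measurable
  rw [lintegral_add_left value_measurable, mul_add]
  refine line_bound.trans ?_
  gcongr
  · exact le_add_self
  · exact (lintegral_mono deriv_le).trans (le_mul_of_one_le_left' le_self_add)

lemma jetENorm_le_mul_setLIntegral_update [DecidableEq ι] [CompleteSpace F]
    {f : EuclideanSpace ℝ ι → F} {m : ℕ}
    (hf : ContDiff ℝ (m + 1) f) {a b : ℝ} (hab : a < b) {x : ι → ℝ} {i : ι}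
    (hx : x i ∈ Icc a b) :
    jetENorm m f (WithLp.toLp 2 x) ≤ 2 * (1 + (ENNReal.ofReal (b - a))⁻¹) *
      ∫⁻ t in Icc a b, jetENorm (m + 1) f (WithLp.toLp 2 (update x i t)) := by
  let line (t : ℝ) : EuclideanSpace ℝ ι := WithLp.toLp 2 (update x i t)
  set K := 1 + (ENNReal.ofReal (b - a))⁻¹
  have line_measurable : Measurable line :=
    (PiLp.continuous_toLp 2 _).measurable.comp (measurable_update x)
  have deriv_measurable : ∀ j ≤ m + 1, Measurable fun t => ‖iteratedFDeriv ℝ j f (line t)‖ₑ :=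
    fun j hj => ((hf.continuous_iteratedFDeriv (m := j) (mod_cast hj)).enorm.measurable).comp
      line_measurable
  calc jetENorm m f (WithLp.toLp 2 x)
      ≤ ∑ j ∈ range (m + 1), K * ∫⁻ t in Icc a b,
          (‖iteratedFDeriv ℝ j f (line t)‖ₑ + ‖iteratedFDeriv ℝ (j + 1) f (line t)‖ₑ) := by
        refine sum_le_sum fun j hj => ?_
        have deriv_contDiff : ContDiff ℝ 1 (iteratedFDeriv ℝ j f) :=
          hf.iteratedFDeriv_right (by norm_cast; have := mem_range.1 hj; lia)
        simpa only [← ofReal_norm, norm_fderiv_iteratedFDeriv] using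
          enorm_le_mul_setLIntegral_update deriv_contDiff hab hx
    _ = K * ∫⁻ t in Icc a b, ∑ j ∈ range (m + 1),
          (‖iteratedFDeriv ℝ j f (line t)‖ₑ + ‖iteratedFDeriv ℝ (j + 1) f (line t)‖ₑ) := by
        rw [lintegral_finsetSum, mul_sum]
        intro j hj
        have := mem_range.1 hj
        exact (deriv_measurable j (by lia)).add (deriv_measurable (j + 1) (by lia))
    _ ≤ K * ∫⁻ t in Icc a b, 2 * jetENorm (m + 1) f (line t) := by
        gcongr with t
        exact sum_enorm_add_enorm_le_two_mul_jetENorm m f (line t)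
    _ = 2 * K * ∫⁻ t in Icc a b, jetENorm (m + 1) f (line t) := by
        rw [lintegral_const_mul' _ _ ENNReal.ofNat_ne_top, ← mul_assoc, mul_comm K]

theorem enorm_le_mul_setLIntegral_jetENorm [CompleteSpace F] {f : EuclideanSpace ℝ ι → F}
    (hf : ContDiff ℝ (Fintype.card ι) f) {z x : EuclideanSpace ℝ ι} {δ : ℝ} (hδ : 0 < δ)
    (hx : x ∈ closedCube z δ) :
    ‖f x‖ₑ ≤ (2 * (1 + (ENNReal.ofReal (2 * δ))⁻¹)) ^ Fintype.card ι *
      ∫⁻ y in closedCube z δ, jetENorm (Fintype.card ι) f y := by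
  classical
  have jet_measurable : ∀ m ≤ Fintype.card ι, Measurable (jetENorm m f) :=
    fun m hm => (continuous_jetENorm (hf.of_le (mod_cast hm))).measurable
  have mem_box : WithLp.ofLp x ∈ univ.pi fun i => Icc (z i - δ) (z i + δ) := by
    rwa [← preimage_toLp_closedCube z hδ.le]
  have marginal_bound := le_pow_mul_lmarginal_of_le_mul_lintegral_update
    (μ := fun _ => volume) (W := fun m y => jetENorm m f (WithLp.toLp 2 y))
    (K := 2 * (1 + (ENNReal.ofReal (2 * δ))⁻¹)) (fun i => measurableSet_Icc)
    (fun m hm => (jet_measurable m hm).comp (PiLp.continuous_toLp 2 _).measurable)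
    (fun m hm i y hy => by
      have := jetENorm_le_mul_setLIntegral_update (hf.of_le (mod_cast hm))
        (by linarith : z i - δ < z i + δ) (hy i trivial)
      rwa [show z i + δ - (z i - δ) = 2 * δ by ring] at this)
    Finset.univ (m := 0) (by simp) mem_box
  rw [setLIntegral_closedCube z hδ.le (jet_measurable _ le_rfl)]
  simpa only [zero_add, card_univ, lmarginal_univ, jetENorm_zero] using marginal_bound

end Sobolev

section LocalEstimate

lemma factorial_add_le_two_pow_mul (n j : ℕ) : (n + j)! ≤ 2 ^ (n + j) * (n ! * j !) := by
  rw [← Nat.add_choose_mul_factorial_mul_factorial, mul_assoc]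
  gcongr
  exact Nat.choose_le_two_pow _ _

lemma norm_iteratedFDeriv_iteratedFDeriv {𝕜 E F : Type*} [NontriviallyNormedField 𝕜]
    [NormedAddCommGroup E] [NormedSpace 𝕜 E] [NormedAddCommGroup F] [NormedSpace 𝕜 F]
    (f : E → F) (x : E) (n j : ℕ) :
    ‖iteratedFDeriv 𝕜 j (iteratedFDeriv 𝕜 n f) x‖ = ‖iteratedFDeriv 𝕜 (n + j) f x‖ := by
  induction n generalizing j with
  | zero => rw [iteratedFDeriv_zero_eq_comp, LinearIsometryEquiv.norm_iteratedFDeriv_comp_left,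
      zero_add]
  | succ n ih =>
    have uncurry_isometry := LinearIsometryEquiv.norm_iteratedFDeriv_comp_left (𝕜 := 𝕜)
      (F := E →L[𝕜] E[×n]→L[𝕜] F) (G := E[×(n + 1)]→L[𝕜] F)
      ((continuousMultilinearCurryLeftEquiv 𝕜 (fun _ : Fin (n + 1) => E) F).symm :)
      (fderiv 𝕜 (iteratedFDeriv 𝕜 n f)) x j
    rw [add_right_comm, add_assoc, ← ih, ← norm_iteratedFDeriv_fderiv]
    exact uncurry_isometry

lemma setLIntegral_enorm_le_eLpNorm_mul {X F : Type*} [MeasurableSpace X] {μ : Measure X}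
    [NormedAddCommGroup F] {f : X → F} {q : ℝ≥0∞} (hq : 1 ≤ q) {s t : Set X} (hst : s ⊆ t)
    (hf : AEStronglyMeasurable f (μ.restrict s)) :
    ∫⁻ x in s, ‖f x‖ₑ ∂μ ≤ eLpNorm f q (μ.restrict t) * μ s ^ (1 - 1 / q.toReal) := by
  rw [← eLpNorm_one_eq_lintegral_enorm]
  refine (eLpNorm_le_eLpNorm_mul_rpow_measure_univ hq hf).trans ?_
  rw [ENNReal.toReal_one, div_one, Measure.restrict_apply_univ]
  gcongr

lemma setLIntegral_jetENorm_iteratedFDeriv_le {E F : Type*} [NormedAddCommGroup E]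
    [NormedSpace ℝ E] [MeasurableSpace E] [OpensMeasurableSpace E] [NormedAddCommGroup F]
    [NormedSpace ℝ F] {μ : Measure E} {s : Set E} {f : E → F} (hf : ContDiff ℝ ∞ f) {A R : ℝ}
    (hA : 0 ≤ A) (hR : 0 ≤ R)
    (h : ∀ n, ∫⁻ x in s, ‖iteratedFDeriv ℝ n f x‖ₑ ∂μ ≤ ENNReal.ofReal (A * R ^ n * n !))
    (m n : ℕ) :
    ∫⁻ x in s, jetENorm m (iteratedFDeriv ℝ n f) x ∂μ ≤
      ENNReal.ofReal ((∑ j ∈ Finset.range (m + 1), A * (2 * R) ^ j * j !) * (2 * R) ^ n * n !) := by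
  have jet_eq (x : E) : jetENorm m (iteratedFDeriv ℝ n f) x =
      ∑ j ∈ Finset.range (m + 1), ‖iteratedFDeriv ℝ (n + j) f x‖ₑ := by
    simp_rw [jetENorm, ← ofReal_norm, norm_iteratedFDeriv_iteratedFDeriv]
  simp_rw [jet_eq]
  rw [lintegral_finsetSum _ fun j _ =>
      (hf.continuous_iteratedFDeriv (mod_cast le_top)).enorm.measurable,
    Finset.sum_mul, Finset.sum_mul, ENNReal.ofReal_sum_of_nonneg fun j _ => by positivity]
  refine Finset.sum_le_sum fun j _ => (h (n + j)).trans (ENNReal.ofReal_le_ofReal ?_)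
  calc A * R ^ (n + j) * (n + j)! ≤ A * R ^ (n + j) * (2 ^ (n + j) * (n ! * j !)) := by
        gcongr
        exact mod_cast factorial_add_le_two_pow_mul n j
    _ = A * (2 * R) ^ j * j ! * (2 * R) ^ n * n ! := by ring

variable {ι F : Type*} [Fintype ι] [NormedAddCommGroup F] [NormedSpace ℝ F] [CompleteSpace F]

-- Applying the Sobolev inequality to `Dⁿv` costs `card ι` more derivatives, hence the factor
-- `(n + j)! / n! ≤ 2 ^ (n + j) * j!` with `j ≤ card ι`, which doubles the geometric rate `R`.
theorem exists_forall_norm_iteratedFDeriv_le_on_closedCube {v : EuclideanSpace ℝ ι → F}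
    (hv : ContDiff ℝ ∞ v) {z : EuclideanSpace ℝ ι} {δ : ℝ} (hδ : 0 < δ) {A R : ℝ} (hA : 0 ≤ A)
    (hR : 0 ≤ R)
    (h : ∀ n, ∫⁻ x in closedCube z δ, ‖iteratedFDeriv ℝ n v x‖ₑ ≤
      ENNReal.ofReal (A * R ^ n * n !)) :
    ∃ B, ∀ x ∈ closedCube z δ, ∀ n, ‖iteratedFDeriv ℝ n v x‖ ≤ B * (2 * R) ^ n * n ! := by
  set K := (2 * (1 + (ENNReal.ofReal (2 * δ))⁻¹)) ^ Fintype.card ι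
  have K_ne_top : K ≠ ⊤ := by
    simp [K, ENNReal.mul_eq_top, hδ]
  set S := ∑ j ∈ Finset.range (Fintype.card ι + 1), A * (2 * R) ^ j * (j ! : ℝ)
  have : 0 ≤ S := Finset.sum_nonneg fun j _ => by positivity
  refine ⟨K.toReal * S, fun x hx n => ?_⟩
  rw [← ENNReal.ofReal_le_ofReal_iff (by positivity), ofReal_norm]
  calc ‖iteratedFDeriv ℝ n v x‖ₑ
      ≤ K * ∫⁻ y in closedCube z δ, jetENorm (Fintype.card ι) (iteratedFDeriv ℝ n v) y :=
        enorm_le_mul_setLIntegral_jetENorm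
          (hv.iteratedFDeriv_right (m := Fintype.card ι) (mod_cast le_top)) hδ hx
    _ ≤ K * ENNReal.ofReal (S * (2 * R) ^ n * n !) := by
        gcongr
        exact setLIntegral_jetENorm_iteratedFDeriv_le hv hA hR h _ n
    _ = ENNReal.ofReal (K.toReal * S * (2 * R) ^ n * n !) := by
        rw [mul_assoc K.toReal, mul_assoc K.toReal, ENNReal.ofReal_mul ENNReal.toReal_nonneg,
          ENNReal.ofReal_toReal K_ne_top]

theorem exists_forall_mem_ball_norm_iteratedFDeriv_le {v : EuclideanSpace ℝ ι → F}
    (hv : ContDiff ℝ ∞ v) {x₀ : EuclideanSpace ℝ ι} {U : Set (EuclideanSpace ℝ ι)} (hU : U ∈ 𝓝 x₀)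
    {q : ℝ≥0∞} (hq : 1 ≤ q) {A R : ℝ} (hA : 0 ≤ A) (hR : 0 ≤ R)
    (h : ∀ n, eLpNorm (iteratedFDeriv ℝ n v) q (volume.restrict U) ≤
      ENNReal.ofReal (A * R ^ n * n !)) :
    ∃ r > 0, ∃ B, ∀ x ∈ ball x₀ r, ∀ n, ‖iteratedFDeriv ℝ n v x‖ ≤ B * (2 * R) ^ n * n ! := by
  obtain ⟨δ, hδ, cube_subset⟩ := exists_closedCube_subset hU
  obtain ⟨r, hr, ball_subset⟩ := Metric.mem_nhds_iff.1 (closedCube_mem_nhds x₀ hδ)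
  set V := volume (closedCube x₀ δ) ^ (1 - 1 / q.toReal)
  have V_ne_top : V ≠ ⊤ := by
    refine ENNReal.rpow_ne_top_of_nonneg ?_ (isCompact_closedCube x₀ δ).measure_lt_top.ne
    rcases eq_or_ne q ⊤ with rfl | hq_top
    · simp
    · have : 1 ≤ q.toReal := by simpa using ENNReal.toReal_mono hq_top hq
      rw [sub_nonneg, one_div]
      exact inv_le_one_of_one_le₀ this
  have integral_le (n : ℕ) : ∫⁻ x in closedCube x₀ δ, ‖iteratedFDeriv ℝ n v x‖ₑ ≤
      ENNReal.ofReal (A * V.toReal * R ^ n * n !) := by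
    have deriv_continuous : Continuous (iteratedFDeriv ℝ n v) :=
      hv.continuous_iteratedFDeriv (mod_cast le_top)
    calc ∫⁻ x in closedCube x₀ δ, ‖iteratedFDeriv ℝ n v x‖ₑ
        ≤ eLpNorm (iteratedFDeriv ℝ n v) q (volume.restrict U) * V :=
          setLIntegral_enorm_le_eLpNorm_mul hq cube_subset deriv_continuous.aestronglyMeasurable
      _ ≤ ENNReal.ofReal (A * R ^ n * n !) * V := by gcongr; exact h n
      _ = ENNReal.ofReal (A * V.toReal * R ^ n * n !) := by
          rw [← ENNReal.ofReal_toReal V_ne_top, ← ENNReal.ofReal_mul (by positivity),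
            ENNReal.toReal_ofReal ENNReal.toReal_nonneg]
          ring_nf
  obtain ⟨B, hB⟩ := exists_forall_norm_iteratedFDeriv_le_on_closedCube hv hδ
    (mul_nonneg hA ENNReal.toReal_nonneg) hR integral_le
  exact ⟨r, hr, B, fun x hx => hB x (ball_subset hx)⟩

lemma exists_contDiff_eventuallyEq {E F : Type*} [NormedAddCommGroup E] [NormedSpace ℝ E]
    [HasContDiffBump E] [NormedAddCommGroup F] [NormedSpace ℝ F] {n : ℕ∞} {D : Set E}
    (hD : IsOpen D) {u : E → F} (hu : ContDiffOn ℝ n u D) {x₀ : E} (hx₀ : x₀ ∈ D) :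
    ∃ v : E → F, ContDiff ℝ n v ∧ v =ᶠ[𝓝 x₀] u := by
  obtain ⟨ε, hε, closedBall_subset⟩ := Metric.nhds_basis_closedBall.mem_iff.1 (hD.mem_nhds hx₀)
  let bump : ContDiffBump x₀ := ⟨ε / 2, ε, by positivity, by linarith⟩
  have tsupport_subset : tsupport (fun x => bump x • u x) ⊆ D :=
    (tsupport_smul_subset_left _ _).trans (bump.tsupport_eq.trans_subset closedBall_subset)
  refine ⟨fun x => bump x • u x, ?_, ?_⟩
  · refine contMDiff_iff_contDiff.1 (contMDiff_of_tsupport fun x hx => ?_)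
    exact (bump.contDiffAt.smul (hu.contDiffAt (hD.mem_nhds (tsupport_subset hx)))).contMDiffAt
  · filter_upwards [bump.eventuallyEq_one] with x hx
    simp [hx]

end LocalEstimate

section PartialDerivatives

variable {d : ℕ} {u v : EuclideanSpace ℝ (Fin d) → ℂ}

lemma contDiff_pderivDir {m : ℕ} (hu : ContDiff ℝ (m + 1) u) (i : Fin d) :
    ContDiff ℝ m (pderivDir d i u) :=
  (hu.fderiv_right le_rfl).clm_apply contDiff_const

lemma contDiff_pderivList {m : ℕ} (l : List (Fin d)) (hu : ContDiff ℝ (m + l.length : ℕ) u) :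
    ContDiff ℝ m (pderivList d l u) := by
  induction l generalizing m with
  | nil => exact hu
  | cons i l ih => exact contDiff_pderivDir (ih (by rwa [add_assoc, add_comm 1])) i

lemma pderivList_ofFn {n : ℕ} (hu : ContDiff ℝ n u) (r : Fin n → Fin d)
    (x : EuclideanSpace ℝ (Fin d)) :
    pderivList d (List.ofFn r) u x =
      iteratedFDeriv ℝ n u x fun i => EuclideanSpace.single (r i) 1 := by
  induction n generalizing x with
  | zero => simp [pderivList]
  | succ n ih =>
    have derivative_differentiable : DifferentiableAt ℝ (iteratedFDeriv ℝ n u) x :=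
      hu.differentiable_iteratedFDeriv (mod_cast n.lt_succ_self) x
    rw [List.ofFn_succ, pderivList, pderivDir,
      funext (ih (hu.of_le (mod_cast n.le_succ)) fun i => r i.succ),
      derivative_differentiable.iteratedFDeriv_succ_apply_left']
    rfl

lemma pderivDir_comm (hu : ContDiff ℝ 2 u) (i j : Fin d) :
    pderivDir d i (pderivDir d j u) = pderivDir d j (pderivDir d i u) := by
  have second_derivative (i j : Fin d) (x : EuclideanSpace ℝ (Fin d)) :
      pderivDir d i (pderivDir d j u) x =
        fderiv ℝ (fderiv ℝ u) x (EuclideanSpace.single i 1) (EuclideanSpace.single j 1) := by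
    have fderiv_differentiable : DifferentiableAt ℝ (fderiv ℝ u) x :=
      (hu.fderiv_right (m := 1) (by norm_num)).differentiable one_ne_zero x
    change fderiv ℝ (fun y => fderiv ℝ u y (EuclideanSpace.single j 1)) x _ = _
    rw [fderiv_clm_apply fderiv_differentiable (differentiableAt_const _)]
    simp
  ext x
  rw [second_derivative, second_derivative]
  exact hu.contDiffAt.isSymmSndFDerivAt (by simp) _ _

lemma pderivList_perm {l l' : List (Fin d)} (h : l.Perm l') (hu : ContDiff ℝ l.length u) :
    pderivList d l u = pderivList d l' u := by
  induction h with
  | nil => rfl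
  | cons i _ ih =>
    rw [pderivList, pderivList, ih (hu.of_le (mod_cast Nat.le_succ _))]
  | swap i j l =>
    exact pderivDir_comm (contDiff_pderivList (m := 2) l (by rwa [add_comm])) _ _
  | trans h _ ih ih' => exact (ih hu).trans (ih' (by rwa [← h.length_eq]))

lemma perm_flatMap_replicate_count (l : List (Fin d)) :
    l.Perm ((List.finRange d).flatMap fun i => List.replicate (l.count i) i) := by
  rw [List.perm_iff_count]
  intro a
  simp [List.count_flatMap, Function.comp_def, List.count_replicate, ← List.ofFn_eq_map,
    List.sum_ofFn]

lemma pderivList_eq_partialDerivMulti (l : List (Fin d)) (hu : ContDiff ℝ l.length u) :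
    pderivList d l u = partialDerivMulti d (fun i => l.count i) u :=
  pderivList_perm (perm_flatMap_replicate_count l) hu

lemma sum_count_eq_length {ι : Type*} [Fintype ι] [DecidableEq ι] (l : List ι) :
    ∑ i, l.count i = l.length := by
  simpa using Multiset.sum_count_eq_card (s := Finset.univ) (m := (l : Multiset ι)) (by simp)

lemma pderivList_eventuallyEq {x : EuclideanSpace ℝ (Fin d)} (h : u =ᶠ[𝓝 x] v)
    (l : List (Fin d)) : pderivList d l u =ᶠ[𝓝 x] pderivList d l v := by
  induction l with
  | nil => exact h
  | cons i l ih =>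
    filter_upwards [ih.fderiv (𝕜 := ℝ)] with y hy
    rw [pderivList, pderivList, pderivDir, pderivDir, hy]

lemma norm_le_sum_norm_apply_single {ι κ G : Type*} [Fintype ι] [Fintype κ] [DecidableEq κ]
    [DecidableEq ι] [SeminormedAddCommGroup G] [NormedSpace ℝ G]
    (M : ContinuousMultilinearMap ℝ (fun _ : ι => EuclideanSpace ℝ κ) G) :
    ‖M‖ ≤ ∑ r : ι → κ, ‖M fun i => EuclideanSpace.single (r i) 1‖ := by
  refine M.opNorm_le_bound (by positivity) fun m => ?_
  have expansion : m = fun i => ∑ j, m i j • EuclideanSpace.single j (1 : ℝ) := by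
    ext i k
    simp [Pi.single_apply]
  calc ‖M m‖ = ‖∑ r : ι → κ, M fun i => m i (r i) • EuclideanSpace.single (r i) (1 : ℝ)‖ := by
        conv_lhs => rw [expansion, ContinuousMultilinearMap.map_sum]
    _ ≤ ∑ r : ι → κ, ‖M fun i => EuclideanSpace.single (r i) 1‖ * ∏ i, ‖m i‖ := by
        refine (norm_sum_le _ _).trans (Finset.sum_le_sum fun r _ => ?_)
        rw [ContinuousMultilinearMap.map_smul_univ, norm_smul, mul_comm, norm_prod]
        gcongr with i
        exact PiLp.norm_apply_le (m i) (r i)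
    _ = (∑ r : ι → κ, ‖M fun i => EuclideanSpace.single (r i) 1‖) * ∏ i, ‖m i‖ :=
        (Finset.sum_mul _ _ _).symm

theorem eLpNorm_iteratedFDeriv_le {n : ℕ} (hu : ContDiff ℝ n u) {q : ℝ≥0∞} (hq : 1 ≤ q)
    {μ : Measure (EuclideanSpace ℝ (Fin d))} {B : ℝ≥0∞}
    (h : ∀ α : Fin d → ℕ, ∑ i, α i = n → eLpNorm (partialDerivMulti d α u) q μ ≤ B) :
    eLpNorm (iteratedFDeriv ℝ n u) q μ ≤ (d : ℝ≥0∞) ^ n * B := by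
  have partial_continuous (r : Fin n → Fin d) : Continuous (pderivList d (List.ofFn r) u) :=
    (contDiff_pderivList (m := 0) _ (by simpa using hu)).continuous
  have partial_le (r : Fin n → Fin d) : eLpNorm (pderivList d (List.ofFn r) u) q μ ≤ B := by
    rw [pderivList_eq_partialDerivMulti _ (by simpa using hu)]
    exact h _ (by rw [sum_count_eq_length, List.length_ofFn])
  calc eLpNorm (iteratedFDeriv ℝ n u) q μ
      ≤ eLpNorm (∑ r : Fin n → Fin d, fun x => ‖pderivList d (List.ofFn r) u x‖) q μ := by
        refine eLpNorm_mono_real fun x => ?_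
        simp_rw [Finset.sum_apply, pderivList_ofFn hu]
        exact norm_le_sum_norm_apply_single _
    _ ≤ ∑ r : Fin n → Fin d, eLpNorm (fun x => ‖pderivList d (List.ofFn r) u x‖) q μ :=
        eLpNorm_sum_le (fun r _ => (partial_continuous r).norm.aestronglyMeasurable) hq
    _ ≤ ∑ _ : Fin n → Fin d, B := by
        gcongr
        rw [eLpNorm_norm]
        exact partial_le _
    _ = (d : ℝ≥0∞) ^ n * B := by simp

end PartialDerivatives

lemma max_pow_le_exp_mul_factorial (n : ℕ) (k : ℝ) :
    max (n : ℝ) k ^ n ≤ Real.exp |k| * Real.exp 1 ^ n * n ! := by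
  have max_nonneg : 0 ≤ max (n : ℝ) k := le_max_of_le_left n.cast_nonneg
  have max_le : max (n : ℝ) k ≤ |k| + n :=
    max_le (le_add_of_nonneg_left (abs_nonneg k))
      (le_add_of_le_of_nonneg (le_abs_self k) n.cast_nonneg)
  calc max (n : ℝ) k ^ n ≤ Real.exp (max n k) * n ! :=
        (div_le_iff₀ (by positivity)).1 (Real.pow_div_factorial_le_exp _ max_nonneg n)
    _ ≤ Real.exp (|k| + n) * n ! := by gcongr
    _ = Real.exp |k| * Real.exp 1 ^ n * n ! := by rw [Real.exp_add, Real.exp_one_pow]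

lemma eLpNorm_iteratedFDeriv_le_of_max_derivative_bounds {d : ℕ}
    {v : EuclideanSpace ℝ (Fin d) → ℂ} (hv : ContDiff ℝ ∞ v) {q : ℝ≥0∞} (hq : 1 ≤ q)
    {μ : Measure (EuclideanSpace ℝ (Fin d))} {k C Cu : ℝ} (hC : 0 ≤ C) (hCu : 0 ≤ Cu)
    (h : ∀ α : Fin d → ℕ, eLpNorm (partialDerivMulti d α v) q μ ≤
      ENNReal.ofReal (Cu * C ^ (∑ i, α i) * max ((∑ i, α i : ℕ) : ℝ) k ^ (∑ i, α i))) (n : ℕ) :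
    eLpNorm (iteratedFDeriv ℝ n v) q μ ≤
      ENNReal.ofReal (Cu * Real.exp |k| * (Real.exp 1 * d * C) ^ n * n !) := by
  calc eLpNorm (iteratedFDeriv ℝ n v) q μ
      ≤ (d : ℝ≥0∞) ^ n * ENNReal.ofReal (Cu * C ^ n * max (n : ℝ) k ^ n) :=
        eLpNorm_iteratedFDeriv_le (hv.of_le (mod_cast le_top)) hq fun α hα => by
          simpa only [hα] using h α
    _ = ENNReal.ofReal (d ^ n * (Cu * C ^ n * max (n : ℝ) k ^ n)) := by
        rw [ENNReal.ofReal_mul (p := (d : ℝ) ^ n) (by positivity),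
          ENNReal.ofReal_pow d.cast_nonneg, ENNReal.ofReal_natCast]
    _ ≤ ENNReal.ofReal (d ^ n * (Cu * C ^ n * (Real.exp |k| * Real.exp 1 ^ n * n !))) := by
        gcongr
        exact max_pow_le_exp_mul_factorial n k
    _ = ENNReal.ofReal (Cu * Real.exp |k| * (Real.exp 1 * d * C) ^ n * n !) := by ring_nf

theorem analytic_of_max_derivative_bounds_general {d : ℕ} (hd : 1 ≤ d)
    {D : Set (EuclideanSpace ℝ (Fin d))} (hD : IsOpen D) {q : ℝ≥0∞} (hq : 1 ≤ q) {k : ℝ}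
    {u : EuclideanSpace ℝ (Fin d) → ℂ} (hu : ContDiffOn ℝ ∞ u D) {C Cu : ℝ} (hC : 0 < C)
    (hCu : 0 ≤ Cu)
    (h : ∀ α : Fin d → ℕ, eLpNorm (partialDerivMulti d α u) q (volume.restrict D) ≤
      ENNReal.ofReal (Cu * C ^ (∑ i, α i) * max ((∑ i, α i : ℕ) : ℝ) k ^ (∑ i, α i)))
    {x₀ : EuclideanSpace ℝ (Fin d)} (hx₀ : x₀ ∈ D) :
    HasFPowerSeriesAt u (taylorSeries u x₀) x₀ ∧
      ENNReal.ofReal (1 / (2 * Real.exp 1 * d) / C) ≤ (taylorSeries u x₀).radius := by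
  obtain ⟨v, hv, hvu⟩ := exists_contDiff_eventuallyEq hD hu hx₀
  set U := {x | v =ᶠ[𝓝 x] u} ∩ D
  have U_isOpen : IsOpen U := isOpen_setOfPred_eventually_nhds.inter hD
  have partial_le (α : Fin d → ℕ) : eLpNorm (partialDerivMulti d α v) q (volume.restrict U) ≤
      ENNReal.ofReal (Cu * C ^ (∑ i, α i) * max ((∑ i, α i : ℕ) : ℝ) k ^ (∑ i, α i)) := by
    have partial_ae_eq :
        partialDerivMulti d α v =ᵐ[volume.restrict U] partialDerivMulti d α u := by
      filter_upwards [ae_restrict_mem U_isOpen.measurableSet] with x hx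
      exact (pderivList_eventuallyEq hx.1 _).eq_of_nhds
    rw [eLpNorm_congr_ae partial_ae_eq]
    exact (eLpNorm_mono_measure _ (Measure.restrict_mono inter_subset_right le_rfl)).trans (h α)
  obtain ⟨r, hr, B, hB⟩ := exists_forall_mem_ball_norm_iteratedFDeriv_le hv
    (U_isOpen.mem_nhds ⟨hvu, hx₀⟩) hq (by positivity) (by positivity)
    (eLpNorm_iteratedFDeriv_le_of_max_derivative_bounds hv hq hC.le hCu partial_le)
  have hR : 0 < 2 * (Real.exp 1 * d * C) := by
    have : (0 : ℝ) < d := mod_cast hd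
    positivity
  rw [← taylorSeries_congr hvu]
  refine ⟨(hasFPowerSeriesOnBall_taylorSeries hR hr (fun _ _ => hv.contDiffAt)
    hB).hasFPowerSeriesAt.congr hvu, ?_⟩
  convert inv_le_radius_taylorSeries hR (hB x₀ (mem_ball_self hr)) using 2
  rw [div_div, one_div]
  ring_nf

/-- If `‖∂^α u‖_{L²(D)} ≤ C_u C^{|α|} max{|α|, k}^{|α|}` for every
multi-index `α`, then `u` is real-analytic on the bounded open set `D`, and there exists a
constant `c > 0` depending only on `d` (in particular independent of `k` and `C_u`) such
that the Taylor series of `u` at every point of `D` has radius of convergence at least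
`c / C`. -/
theorem analytic_of_max_derivative_bounds
    (d : ℕ) (hd : 1 ≤ d) :
    ∃ c : ℝ, 0 < c ∧
      ∀ (D : Set (EuclideanSpace ℝ (Fin d))), IsOpen D → Bornology.IsBounded D →
      ∀ (k : ℝ), 1 ≤ k →
      ∀ (u : EuclideanSpace ℝ (Fin d) → ℂ), ContDiffOn ℝ (⊤ : ℕ∞) u D →
      ∀ (C Cu : ℝ), 0 < C → 0 < Cu →
      (∀ α : Fin d → ℕ,
        eLpNorm (partialDerivMulti d α u) 2 (volume.restrict D)
          ≤ ENNReal.ofReal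
              (Cu * C ^ (∑ i, α i) * max ((∑ i, α i : ℕ) : ℝ) k ^ (∑ i, α i))) →
      (∀ x ∈ D, AnalyticAt ℝ u x) ∧
        ∀ x₀ ∈ D, ∃ p : FormalMultilinearSeries ℝ (EuclideanSpace ℝ (Fin d)) ℂ,
          HasFPowerSeriesAt u p x₀ ∧ ENNReal.ofReal (c / C) ≤ p.radius := by
  have : (0 : ℝ) < d := mod_cast hd
  refine ⟨1 / (2 * Real.exp 1 * d), by positivity, fun D hD _ k _ u hu C Cu hC hCu h => ?_⟩
  have key (x₀) (hx₀ : x₀ ∈ D) :=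
    analytic_of_max_derivative_bounds_general hd hD one_le_two hu hC hCu.le h hx₀
  exact ⟨fun x hx => (key x hx).1.analyticAt, fun x hx => ⟨taylorSeries u x, key x hx⟩⟩
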